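/- For every 0 ≤ t < T, x ∈ ℝ and w > 0, the second derivative of the Black–Scholes call price with respect to the squared volatility satisfies ∂²_{ww} [BS(t,x,√w)] = ((T − t)²/4) · (∂²_{xx} − ∂_x)² BS(t,x,√w). In other words, ∂²_{σ²} BS(t,x,σ) = ((T−t)²/4)(∂²_x − ∂_x)² BS(t,x,σ). -/

import Mathlib

open Real MeasureTheory

/-- Standard normal cumulative distribution function. -/
noncomputable def stdNormalCDF (x : ℝ) : ℝ :=
  ∫ t in Set.Iic x, (Real.sqrt (2 * Real.pi))⁻¹ * Real.exp (-t ^ 2 / 2)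

/-- d₊ in the Black–Scholes formula. -/
noncomputable def dPlus (T K r t x y : ℝ) : ℝ :=
  (x - Real.log K + (r + y ^ 2 / 2) * (T - t)) / (y * Real.sqrt (T - t))

/-- d₋ in the Black–Scholes formula. -/
noncomputable def dMinus (T K r t x y : ℝ) : ℝ :=
  (x - Real.log K + (r - y ^ 2 / 2) * (T - t)) / (y * Real.sqrt (T - t))

/-- Black–Scholes call price with maturity `T`, strike `K`, interest rate `r`,
current time `t`, log spot price `x` and volatility `y`. -/
noncomputable def BS (T K r t x y : ℝ) : ℝ :=
  Real.exp x * stdNormalCDF (dPlus T K r t x y)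
    - K * Real.exp (-r * (T - t)) * stdNormalCDF (dMinus T K r t x y)

/-- The operator Γ := ∂²ₓₓ − ∂ₓ acting on functions of the log spot price. -/
noncomputable def GammaOp (f : ℝ → ℝ) : ℝ → ℝ :=
  fun x => deriv (deriv f) x - deriv f x

/-!
In terms of the total variance `v = w (T - t)` and the log discounted strike
`k = log K - r (T - t)`, the price is `C = e^x Φ((x - k + v/2)/√v) - e^k Φ((x - k - v/2)/√v)`.
With `g` the heat kernel, the identity `e^x g v (x - k + v/2) = e^k g v (x - k - v/2)` cancels the
terms coming from `d₊` and `d₋` and gives `Γ C = e^k g v (x - k - v/2)`. Since `∂_v g = ½ ∂_yy g`,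
and the drift `-v/2` turns `½ ∂_yy` into `½ Γ`, both `C` and `Γ C` solve `∂_v u = ½ Γ u`. Hence
`∂²_vv C = ¼ Γ Γ C`, and `v = w (T - t)` contributes the factor `(T - t)²`.
-/

open scoped Topology NNReal

theorem hasDerivAt_integral_Iic {E : Type*} [NormedAddCommGroup E] [NormedSpace ℝ E]
    [CompleteSpace E] {f : ℝ → E} {x : ℝ} (hf : Integrable f) (hx : ContinuousAt f x) :
    HasDerivAt (fun u => ∫ t in Set.Iic u, f t) (f x) x := by
  have hftc : HasDerivAt (fun u => ∫ t in (0 : ℝ)..u, f t) (f x) x :=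
    intervalIntegral.integral_hasDerivAt_right hf.intervalIntegrable
      hf.aestronglyMeasurable.stronglyMeasurableAtFilter hx
  refine (hftc.const_add (∫ t in Set.Iic 0, f t)).congr_of_eventuallyEq (.of_forall fun u => ?_)
  simp only [← intervalIntegral.integral_Iic_sub_Iic hf.integrableOn hf.integrableOn,
    add_sub_cancel]

theorem deriv_deriv_comp_mul_left {𝕜 E : Type*} [NontriviallyNormedField 𝕜]
    [NormedAddCommGroup E] [NormedSpace 𝕜 E] (c : 𝕜) (f : 𝕜 → E) (x : 𝕜) :
    deriv (deriv fun u => f (c * u)) x = c ^ 2 • deriv (deriv f) (c * x) := by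
  rw [funext (deriv_comp_mul_left c f), deriv_fun_const_smul_field,
    deriv_comp_mul_left c (deriv f), smul_smul, sq]

theorem gammaOp_eq_of_hasDerivAt {f f' : ℝ → ℝ} {f'' x : ℝ} (hf : ∀ u, HasDerivAt f (f' u) u)
    (hf' : HasDerivAt f' f'' x) : GammaOp f x = f'' - f' x := by
  rw [GammaOp, deriv_eq hf, hf'.deriv]

section HeatKernel

/-- The fundamental solution of the heat equation `∂_v g = ½ ∂_yy g`, that is, the density of the
centred normal law of variance `v`. Unlike in `ProbabilityTheory.gaussianPDFReal`, the variance is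
a real number, so that one can differentiate in it. -/
noncomputable def heatKernel (v y : ℝ) : ℝ :=
  (√(2 * π * v))⁻¹ * exp (-y ^ 2 / (2 * v))

theorem heatKernel_coe_nnreal (v : ℝ≥0) :
    heatKernel v = ProbabilityTheory.gaussianPDFReal 0 v := by
  funext y
  rw [heatKernel, ProbabilityTheory.gaussianPDFReal, sub_zero]

theorem integrable_heatKernel {v : ℝ} (hv : 0 ≤ v) : Integrable (heatKernel v) := by
  lift v to ℝ≥0 using hv
  exact heatKernel_coe_nnreal v ▸ ProbabilityTheory.integrable_gaussianPDFReal 0 v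

theorem continuous_heatKernel (v : ℝ) : Continuous (heatKernel v) := by
  unfold heatKernel
  fun_prop

theorem stdNormalCDF_eq_integral_heatKernel (x : ℝ) :
    stdNormalCDF x = ∫ t in Set.Iic x, heatKernel 1 t := by
  simp only [stdNormalCDF, heatKernel, mul_one]

theorem hasDerivAt_stdNormalCDF (x : ℝ) : HasDerivAt stdNormalCDF (heatKernel 1 x) x := by
  rw [funext stdNormalCDF_eq_integral_heatKernel]
  exact hasDerivAt_integral_Iic (integrable_heatKernel zero_le_one)
    (continuous_heatKernel 1).continuousAt

theorem heatKernel_one_div_sqrt {v : ℝ} (hv : 0 < v) (y : ℝ) :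
    heatKernel 1 (y / √v) = √v * heatKernel v y := by
  have hs : √v ≠ 0 := (sqrt_pos.2 hv).ne'
  rw [heatKernel, heatKernel, sqrt_mul' _ hv.le, div_pow, sq_sqrt hv.le]
  field_simp

variable {v y : ℝ → ℝ} {v' y' s : ℝ}

theorem hasDerivAt_heatKernel_comp (hv : HasDerivAt v v' s) (hy : HasDerivAt y y' s)
    (hpos : 0 < v s) :
    HasDerivAt (fun u => heatKernel (v u) (y u))
      (heatKernel (v s) (y s) *
        ((y s ^ 2 / v s ^ 2 - 1 / v s) / 2 * v' - y s / v s * y')) s := by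
  have hexp := ((hy.pow 2).neg.div (hv.const_mul 2) (by positivity)).exp
  have hsqrt := ((hv.const_mul (2 * π)).sqrt (by positivity)).inv (by positivity)
  have hsq : √(2 * π * v s) ^ 2 = 2 * π * v s := sq_sqrt (by positivity)
  refine (hsqrt.mul hexp).congr_deriv ?_
  simp only [heatKernel, Pi.pow_apply, Pi.neg_apply, Pi.inv_apply, Pi.div_apply]
  field_simp
  rw [hsq]
  ring

theorem hasDerivAt_stdNormalCDF_div_sqrt (hv : HasDerivAt v v' s) (hy : HasDerivAt y y' s)
    (hpos : 0 < v s) :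
    HasDerivAt (fun u => stdNormalCDF (y u / √(v u)))
      (heatKernel (v s) (y s) * (y' - y s / (2 * v s) * v')) s := by
  have hs : √(v s) ≠ 0 := (sqrt_pos.2 hpos).ne'
  have hquot := hy.div (hv.sqrt hpos.ne') hs
  refine ((hasDerivAt_stdNormalCDF _).comp s hquot).congr_deriv ?_
  simp only [Pi.div_apply]
  rw [heatKernel_one_div_sqrt hpos]
  have hsq : √(v s) ^ 2 = v s := sq_sqrt hpos.le
  field_simp
  rw [hsq]
  ring

end HeatKernel

section TotalVariance

/-- The Black–Scholes call price as a function of the log discounted strike `k`, the total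
variance `v` and the log spot price `x`; see `BS_sqrt_eq_callPrice`. -/
noncomputable def callPrice (k v x : ℝ) : ℝ :=
  exp x * stdNormalCDF ((x - k + v / 2) / √v) - exp k * stdNormalCDF ((x - k - v / 2) / √v)

/-- The dollar gamma `S² ∂²_SS C` of a call option at the spot price `S = e^x`, in the variables of
`callPrice`. As `S² ∂²_SS = ∂²_xx - ∂_x`, it is the image of `callPrice` under `GammaOp`. -/
noncomputable def dollarGamma (k v x : ℝ) : ℝ :=
  exp k * heatKernel v (x - k - v / 2)

variable {v : ℝ} (k x : ℝ)

theorem exp_mul_heatKernel_eq_dollarGamma (hv : v ≠ 0) :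
    exp x * heatKernel v (x - k + v / 2) = dollarGamma k v x := by
  simp only [dollarGamma, heatKernel, mul_left_comm (exp _), ← exp_add]
  congr 2
  field_simp
  ring

theorem BS_sqrt_eq_callPrice {T K t w : ℝ} (r : ℝ) (hK : 0 < K) (htT : t ≤ T) (hw : 0 ≤ w) :
    BS T K r t x √w = callPrice (log K - r * (T - t)) ((T - t) * w) x := by
  have hstrike : K * exp (-r * (T - t)) = exp (log K - r * (T - t)) := by
    rw [exp_sub, exp_log hK, neg_mul, exp_neg, div_eq_mul_inv]
  rw [BS, callPrice, dPlus, dMinus, hstrike, sq_sqrt hw, sqrt_mul (sub_nonneg.2 htT),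
    mul_comm √w]
  ring_nf

theorem hasDerivAt_callPrice_log_spot (hv : 0 < v) :
    HasDerivAt (callPrice k v) (exp x * stdNormalCDF ((x - k + v / 2) / √v)) x := by
  have hplus := hasDerivAt_stdNormalCDF_div_sqrt (hasDerivAt_const x v)
    (((hasDerivAt_id x).sub_const k).add_const (v / 2)) hv
  have hminus := hasDerivAt_stdNormalCDF_div_sqrt (hasDerivAt_const x v)
    (((hasDerivAt_id x).sub_const k).sub_const (v / 2)) hv
  refine (((hasDerivAt_exp x).mul hplus).sub (hminus.const_mul (exp k))).congr_deriv ?_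
  have hsymm := exp_mul_heatKernel_eq_dollarGamma k x hv.ne'
  simp only [dollarGamma, id_eq] at hsymm ⊢
  linear_combination hsymm

theorem gammaOp_callPrice (hv : 0 < v) : GammaOp (callPrice k v) = dollarGamma k v := by
  funext x
  have hplus := hasDerivAt_stdNormalCDF_div_sqrt (hasDerivAt_const x v)
    (((hasDerivAt_id x).sub_const k).add_const (v / 2)) hv
  rw [gammaOp_eq_of_hasDerivAt (fun u => hasDerivAt_callPrice_log_spot k u hv)
    ((hasDerivAt_exp x).mul hplus), ← exp_mul_heatKernel_eq_dollarGamma k x hv.ne']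
  simp only [id_eq]
  ring

theorem hasDerivAt_callPrice_variance (hv : 0 < v) :
    HasDerivAt (fun u => callPrice k u x) (1 / 2 * GammaOp (callPrice k v) x) v := by
  have hid := hasDerivAt_id v
  have hplus := hasDerivAt_stdNormalCDF_div_sqrt hid ((hid.div_const 2).const_add (x - k)) hv
  have hminus := hasDerivAt_stdNormalCDF_div_sqrt hid ((hid.div_const 2).const_sub (x - k)) hv
  refine ((hplus.const_mul (exp x)).sub (hminus.const_mul (exp k))).congr_deriv ?_
  have hsymm := exp_mul_heatKernel_eq_dollarGamma k x hv.ne'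
  rw [gammaOp_callPrice k hv]
  simp only [dollarGamma, id_eq] at hsymm ⊢
  have hdrift : (x - k + v / 2) / (2 * v) - (x - k - v / 2) / (2 * v) = 1 / 2 := by
    field_simp
    ring
  linear_combination (1 / 2 - (x - k + v / 2) / (2 * v)) * hsymm -
    exp k * heatKernel v (x - k - v / 2) * hdrift

theorem hasDerivAt_dollarGamma_log_spot (hv : 0 < v) :
    HasDerivAt (dollarGamma k v) (-((x - k - v / 2) / v) * dollarGamma k v x) x := by
  have hy := ((hasDerivAt_id x).sub_const k).sub_const (v / 2)
  refine ((hasDerivAt_heatKernel_comp (hasDerivAt_const x v) hy hv).const_mul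
    (exp k)).congr_deriv ?_
  simp only [dollarGamma, id_eq]
  ring

theorem gammaOp_dollarGamma (hv : 0 < v) :
    GammaOp (dollarGamma k v) x =
      ((x - k - v / 2) ^ 2 / v ^ 2 - 1 / v + (x - k - v / 2) / v) * dollarGamma k v x := by
  have hy := ((((hasDerivAt_id x).sub_const k).sub_const (v / 2)).div_const v).neg
  rw [gammaOp_eq_of_hasDerivAt (fun u => hasDerivAt_dollarGamma_log_spot k u hv)
    (hy.mul (hasDerivAt_dollarGamma_log_spot k x hv))]
  simp only [Pi.neg_apply, id_eq]
  ring

theorem hasDerivAt_dollarGamma_variance (hv : 0 < v) :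
    HasDerivAt (fun u => dollarGamma k u x) (1 / 2 * GammaOp (dollarGamma k v) x) v := by
  have hid := hasDerivAt_id v
  have hy := (hid.div_const 2).const_sub (x - k)
  refine ((hasDerivAt_heatKernel_comp hid hy hv).const_mul (exp k)).congr_deriv ?_
  rw [gammaOp_dollarGamma k x hv]
  simp only [dollarGamma, id_eq]
  ring

theorem deriv_deriv_callPrice_variance (hv : 0 < v) :
    deriv (deriv fun u => callPrice k u x) v = 1 / 4 * GammaOp (GammaOp (callPrice k v)) x := by
  have hderiv : (deriv fun u => callPrice k u x) =ᶠ[𝓝 v] fun u => 1 / 2 * dollarGamma k u x := by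
    filter_upwards [lt_mem_nhds hv] with u hu
    rw [(hasDerivAt_callPrice_variance k x hu).deriv, gammaOp_callPrice k hu]
  rw [hderiv.deriv_eq, ((hasDerivAt_dollarGamma_variance k x hv).const_mul _).deriv,
    gammaOp_callPrice k hv]
  ring

end TotalVariance

/-- Second derivative of the Black–Scholes price with respect to the squared
volatility: ∂²_{σ²} BS(t,x,σ) = ((T−t)²/4)(∂²ₓ − ∂ₓ)² BS(t,x,σ). -/
theorem d2sigma_sq_bs (T K r : ℝ) (hT : 0 < T) (hK : 0 < K)
    (t x w : ℝ) (ht0 : 0 ≤ t) (htT : t < T) (hw : 0 < w) :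
    deriv (deriv (fun w' => BS T K r t x (Real.sqrt w'))) w
      = ((T - t) ^ 2 / 4)
          * GammaOp (GammaOp (fun x' => BS T K r t x' (Real.sqrt w))) x := by
  set k := log K - r * (T - t)
  have hspot : (fun x' => BS T K r t x' √w) = callPrice k ((T - t) * w) :=
    funext fun x' => BS_sqrt_eq_callPrice x' r hK htT.le hw.le
  have hvol : (fun w' => BS T K r t x √w') =ᶠ[𝓝 w] fun w' => callPrice k ((T - t) * w') x := by
    filter_upwards [lt_mem_nhds hw] with w' hw'
    exact BS_sqrt_eq_callPrice x r hK htT.le hw'.le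
  rw [hspot, hvol.deriv.deriv_eq, deriv_deriv_comp_mul_left (T - t) (fun v => callPrice k v x),
    deriv_deriv_callPrice_variance k x (mul_pos (sub_pos.2 htT) hw), smul_eq_mul]
  ring
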